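/- arXiv:1411.6763 — 6 statements merged into one kernel-verified Lean document; each statement's English description precedes it below -/
import Mathlib

section
/- Let G = (V, E, Σ) be an RDF graph with a fragmentation into fragments F_1, …, F_k, and let Q be a weakly connected query graph. Let f be a crossing match of Q in G and let F_i be a fragment such that at least one matched edge of f belongs to E_i. Then every weakly connected component of the overlap M ∩ F_i contains at least one crossing edge of F_i (step (2) of the proof of Proposition 1, establishing Condition 4). -/
/-!
A component containing an endpoint of a crossing overlap edge contains that whole edge, so only a
component with an inner overlap edge needs an argument; it contains some `f u` internal to `F_i`.
Because `f` is a crossing match, some query vertex `w` has `f w` outside `V_i`: the endpoints of an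
edge crossing any fragment lie in different parts (`exists_notMem_part`). Along a path of query
edges from `u` to `w`, each query edge leaving a vertex matched inside `V_i` is matched by a data
edge with an endpoint in `V_i`, hence by an edge of the overlap
(`exists_overlapEdge_of_qAdj`). So the image of the path stays in the component until it leaves
`V_i`, and the edge through which it first leaves is the required crossing edge.
-/

namespace RDF

variable {V L VQ : Type*}

/-- A query-edge label (`none` stands for the wildcard `∗`) matches a data-edge label `p`
iff it is `p` itself or the wildcard. -/
def labelMatches (ℓ : Option L) (p : L) : Prop :=
  ℓ = some p ∨ ℓ = none

/-- A fragmentation of the vertex set of an RDF graph into `k` fragments, given by the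
pairwise disjoint sets of internal vertices `V_1, …, V_k` covering all vertices. -/
structure Fragmentation (V : Type*) (k : ℕ) where
  part : Fin k → Set V
  disj : ∀ i j, i ≠ j → Disjoint (part i) (part j)
  cover : ∀ v : V, ∃ i, v ∈ part i

/-- A SPARQL query graph: constant query vertices are given by the partial function `c`,
and query edges carry a label in `Σ` (`some`) or the wildcard `∗` (`none`). -/
structure QueryGraph (VQ V L : Type*) where
  c : VQ → Option V
  EQ : Set (VQ × Option L × VQ)

/-- Undirected adjacency of query vertices in the query graph. -/
def QueryGraph.qAdj (Q : QueryGraph VQ V L) (u u' : VQ) : Prop :=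
  ∃ ℓ, (u, ℓ, u') ∈ Q.EQ ∨ (u', ℓ, u) ∈ Q.EQ

/-- The query graph is weakly connected: any two query vertices are joined by a sequence
of query edges, ignoring edge directions. -/
def QueryGraph.WeaklyConnected (Q : QueryGraph VQ V L) : Prop :=
  ∀ u u' : VQ, Relation.ReflTransGen Q.qAdj u u'

/-- `e` is an inner edge of the fragment with internal vertex set `Vi`. -/
def innerEdge (E : Set (V × L × V)) (Vi : Set V) (e : V × L × V) : Prop :=
  e ∈ E ∧ e.1 ∈ Vi ∧ e.2.2 ∈ Vi

/-- `e` is a crossing edge of the fragment with internal vertex set `Vi`: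
exactly one of its endpoints lies in `Vi`. -/
def crossingEdge (E : Set (V × L × V)) (Vi : Set V) (e : V × L × V) : Prop :=
  e ∈ E ∧ Xor' (e.1 ∈ Vi) (e.2.2 ∈ Vi)

/-- `E_i`: the set of all inner and crossing edges of the fragment. -/
def fragEdges (E : Set (V × L × V)) (Vi : Set V) : Set (V × L × V) :=
  {e | innerEdge E Vi e ∨ crossingEdge E Vi e}

/-- The extended vertices `V_i^e` of the fragment: endpoints of crossing edges of the
fragment lying outside `Vi`. -/
def extVerts (E : Set (V × L × V)) (Vi : Set V) : Set V :=
  {v | v ∉ Vi ∧ ∃ e, crossingEdge E Vi e ∧ (v = e.1 ∨ v = e.2.2)}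

/-- `f` is a match of query `Q` in the RDF graph with edge set `E`. -/
def IsMatch (E : Set (V × L × V)) (Q : QueryGraph VQ V L) (f : VQ → V) : Prop :=
  (∀ u w, Q.c u = some w → f u = w) ∧
  (∀ u ℓ u', (u, ℓ, u') ∈ Q.EQ → ∃ p, (f u, p, f u') ∈ E ∧ labelMatches ℓ p)

/-- The matched edges of a match `f`. -/
def matchedEdges (E : Set (V × L × V)) (Q : QueryGraph VQ V L) (f : VQ → V) :
    Set (V × L × V) :=
  {e | e ∈ E ∧
    ∃ u ℓ u', (u, ℓ, u') ∈ Q.EQ ∧ f u = e.1 ∧ f u' = e.2.2 ∧ labelMatches ℓ e.2.1}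

/-- A crossing match: a match one of whose matched edges is a crossing edge of some
fragment. -/
def IsCrossingMatch {k : ℕ} (E : Set (V × L × V)) (F : Fragmentation V k)
    (Q : QueryGraph VQ V L) (f : VQ → V) : Prop :=
  IsMatch E Q f ∧ ∃ i, ∃ e ∈ matchedEdges E Q f, crossingEdge E (F.part i) e

/-- The matched edges of a partial function `f : VQ ⇀ V` within the fragment:
data edges of `E_i` matching a query edge whose endpoints are both in the domain. -/
def pMatchedEdges (E : Set (V × L × V)) (Vi : Set V) (Q : QueryGraph VQ V L)
    (f : VQ → Option V) : Set (V × L × V) :=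
  {e | e ∈ fragEdges E Vi ∧
    ∃ u ℓ u', (u, ℓ, u') ∈ Q.EQ ∧ f u = some e.1 ∧ f u' = some e.2.2 ∧
      labelMatches ℓ e.2.1}

/-- A local partial match of query `Q` in the fragment with internal vertex set `Vi`
(Definition 6 of the paper), given as a partial function `f : VQ ⇀ V`. -/
def IsLocalPartialMatch (E : Set (V × L × V)) (Vi : Set V) (Q : QueryGraph VQ V L)
    (f : VQ → Option V) : Prop :=
  -- nonempty domain
  (∃ u a, f u = some a) ∧
  -- (1) constants are respected
  (∀ u a, f u = some a → ∀ w, Q.c u = some w → a = w) ∧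
  -- (2) values lie in `V_i ∪ V_i^e`
  (∀ u a, f u = some a → a ∈ Vi ∪ extVerts E Vi) ∧
  -- (3) query edges between matched query vertices
  (∀ u ℓ u' a b, (u, ℓ, u') ∈ Q.EQ → f u = some a → f u' = some b →
    (∃ p, (a, p, b) ∈ fragEdges E Vi ∧ labelMatches ℓ p) ∨
      (a ∈ extVerts E Vi ∧ b ∈ extVerts E Vi)) ∧
  -- (4) at least one matched edge is a crossing edge of the fragment
  (∃ e ∈ pMatchedEdges E Vi Q f, crossingEdge E Vi e) ∧
  -- (5) query neighbors of query vertices matched to internal vertices are matched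
  (∀ u a, f u = some a → a ∈ Vi →
    (∀ ℓ u', (u, ℓ, u') ∈ Q.EQ →
      ∃ b, f u' = some b ∧ ∃ p, (a, p, b) ∈ E ∧ labelMatches ℓ p) ∧
    (∀ ℓ u', (u', ℓ, u) ∈ Q.EQ →
      ∃ b, f u' = some b ∧ ∃ p, (b, p, a) ∈ E ∧ labelMatches ℓ p)) ∧
  -- (6) query vertices matched to internal vertices are joined by an undirected path
  -- in `Q` all of whose vertices are matched to internal vertices
  (∀ u u' a b, f u = some a → f u' = some b → a ∈ Vi → b ∈ Vi →
    Relation.ReflTransGen (fun x y => Q.qAdj x y ∧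
      (∃ cx, f x = some cx ∧ cx ∈ Vi) ∧ (∃ cy, f y = some cy ∧ cy ∈ Vi)) u u') ∧
  -- the matched subgraph (vertex set `f (dom f)`, edge set the matched edges of `f`)
  -- is weakly connected
  (∀ a b, (∃ u, f u = some a) → (∃ u, f u = some b) →
    Relation.ReflTransGen (fun x y =>
      ∃ p, (x, p, y) ∈ pMatchedEdges E Vi Q f ∨ (y, p, x) ∈ pMatchedEdges E Vi Q f) a b)

/-- The edge set of the overlap `M ∩ F_i` of a match `f` with the fragment:
the matched edges of `f` that belong to `E_i`. -/
def overlapEdges (E : Set (V × L × V)) (Vi : Set V) (Q : QueryGraph VQ V L)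
    (f : VQ → V) : Set (V × L × V) :=
  matchedEdges E Q f ∩ fragEdges E Vi

/-- Undirected adjacency via edges of the overlap `M ∩ F_i`. -/
def overlapAdj (E : Set (V × L × V)) (Vi : Set V) (Q : QueryGraph VQ V L)
    (f : VQ → V) (a b : V) : Prop :=
  ∃ p, (a, p, b) ∈ overlapEdges E Vi Q f ∨ (b, p, a) ∈ overlapEdges E Vi Q f

/-- The vertices of the overlap `M ∩ F_i`: endpoints of its edges. -/
def overlapVertex (E : Set (V × L × V)) (Vi : Set V) (Q : QueryGraph VQ V L)
    (f : VQ → V) (a : V) : Prop :=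
  ∃ e ∈ overlapEdges E Vi Q f, a = e.1 ∨ a = e.2.2

/-- `C` is (the vertex set of) a weakly connected component of the overlap `M ∩ F_i`. -/
def IsOverlapComponent (E : Set (V × L × V)) (Vi : Set V) (Q : QueryGraph VQ V L)
    (f : VQ → V) (C : Set V) : Prop :=
  ∃ a, overlapVertex E Vi Q f a ∧
    C = {b | Relation.ReflTransGen (overlapAdj E Vi Q f) a b}

open Classical in
/-- The restriction `f_C` of a match `f` to a component `C`: the partial function with
domain `{u | f u ∈ C}` given by `f`. -/
noncomputable def restrictTo (C : Set V) (f : VQ → V) : VQ → Option V :=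
  fun u => if f u ∈ C then some (f u) else none

/-- Two local partial matches (in fragments with internal vertex sets `Vi` and `Vj`)
are joinable. -/
def Joinable (E : Set (V × L × V)) (Vi Vj : Set V) (Q : QueryGraph VQ V L)
    (fi fj : VQ → Option V) : Prop :=
  -- (1) no query vertex is matched to two different vertices
  (∀ v a b, fi v = some a → fj v = some b → a = b) ∧
  -- (2) a common crossing edge matching a common query edge
  (∃ (x y : VQ) (ℓ : Option L) (u u' : V) (p : L),
    (x, ℓ, y) ∈ Q.EQ ∧ (u, p, u') ∈ E ∧ labelMatches ℓ p ∧
    ((u ∈ Vi ∧ u' ∈ Vj) ∨ (u ∈ Vj ∧ u' ∈ Vi)) ∧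
    fi x = some u ∧ fj x = some u ∧ fi y = some u' ∧ fj y = some u')

end RDF

namespace RDF

theorem mem_fragEdges_of_endpoint {V L : Type*} {E : Set (V × L × V)} {Vi : Set V}
    {e : V × L × V} (he : e ∈ E) (h : e.1 ∈ Vi ∨ e.2.2 ∈ Vi) : e ∈ fragEdges E Vi := by
  simp only [fragEdges, innerEdge, crossingEdge, Set.mem_ofPred_eq]
  tauto

theorem exists_overlapEdge_of_qAdj {V L VQ : Type*} {E : Set (V × L × V)} {Vi : Set V}
    {Q : QueryGraph VQ V L} {f : VQ → V} (hf : IsMatch E Q f) {x y : VQ}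
    (hxy : Q.qAdj x y) (hx : f x ∈ Vi) :
    ∃ e ∈ overlapEdges E Vi Q f,
      (e.1 = f x ∧ e.2.2 = f y) ∨ (e.1 = f y ∧ e.2.2 = f x) := by
  obtain ⟨ℓ, h | h⟩ := hxy
  · obtain ⟨p, hp, hl⟩ := hf.2 _ _ _ h
    exact ⟨(f x, p, f y), ⟨⟨hp, x, ℓ, y, h, rfl, rfl, hl⟩,
      mem_fragEdges_of_endpoint hp (Or.inl hx)⟩, Or.inl ⟨rfl, rfl⟩⟩
  · obtain ⟨p, hp, hl⟩ := hf.2 _ _ _ h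
    exact ⟨(f y, p, f x), ⟨⟨hp, y, ℓ, x, h, rfl, rfl, hl⟩,
      mem_fragEdges_of_endpoint hp (Or.inr hx)⟩, Or.inr ⟨rfl, rfl⟩⟩

theorem exists_notMem_part {V L VQ : Type*} {k : ℕ} {E : Set (V × L × V)}
    {F : Fragmentation V k} {Q : QueryGraph VQ V L} {f : VQ → V}
    (hf : IsCrossingMatch E F Q f) (i : Fin k) : ∃ w, f w ∉ F.part i := by
  obtain ⟨-, j, e, ⟨-, u, ℓ, u', -, hu, hu', -⟩, -, hx⟩ := hf
  by_contra! hall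
  have h1 : e.1 ∈ F.part i := hu ▸ hall u
  have h2 : e.2.2 ∈ F.part i := hu' ▸ hall u'
  rcases eq_or_ne i j with rfl | hij
  · rcases hx with ⟨-, h⟩ | ⟨-, h⟩
    · exact h h2
    · exact h h1
  · have hd := Set.disjoint_left.1 (F.disj i j hij)
    rcases hx with ⟨h, -⟩ | ⟨h, -⟩
    · exact hd h1 h
    · exact hd h2 h

/-- Both endpoints of an overlap edge lie in the component of either of them. -/
theorem IsOverlapComponent.endpoints_mem {V L VQ : Type*} {E : Set (V × L × V)} {Vi : Set V}
    {Q : QueryGraph VQ V L} {f : VQ → V} {C : Set V} (hC : IsOverlapComponent E Vi Q f C)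
    {e : V × L × V} (he : e ∈ overlapEdges E Vi Q f) (h : e.1 ∈ C ∨ e.2.2 ∈ C) :
    e.1 ∈ C ∧ e.2.2 ∈ C := by
  obtain ⟨a, -, rfl⟩ := hC
  rcases h with h | h
  · exact ⟨h, Relation.ReflTransGen.tail h ⟨e.2.1, Or.inl he⟩⟩
  · exact ⟨Relation.ReflTransGen.tail h ⟨e.2.1, Or.inr he⟩, h⟩

/-- **Step (2) of the proof of Proposition 1.** If `f` is a crossing match of a weakly
connected query `Q` and at least one matched edge of `f` belongs to `E_i`, then every
weakly connected component of the overlap `M ∩ F_i` contains at least one crossing edge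
of the fragment `F_i`. -/
theorem overlap_component_contains_crossing_edge
    {V L VQ : Type*} [Finite V] [Finite VQ] {k : ℕ}
    (E : Set (V × L × V)) (F : Fragmentation V k) (Q : QueryGraph VQ V L)
    (hQ : Q.WeaklyConnected) (f : VQ → V)
    (hf : IsCrossingMatch E F Q f) (i : Fin k)
    (hi : ∃ e ∈ matchedEdges E Q f, e ∈ fragEdges E (F.part i))
    (C : Set V) (hC : IsOverlapComponent E (F.part i) Q f C) :
    ∃ e ∈ overlapEdges E (F.part i) Q f,
      crossingEdge E (F.part i) e ∧ e.1 ∈ C ∧ e.2.2 ∈ C := by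
  by_contra hno
  -- Without a crossing edge, every overlap edge meeting `C` is inner and lies in `C`.
  have key : ∀ e ∈ overlapEdges E (F.part i) Q f, (e.1 ∈ C ∨ e.2.2 ∈ C) →
      (e.1 ∈ C ∧ e.1 ∈ F.part i) ∧ (e.2.2 ∈ C ∧ e.2.2 ∈ F.part i) := by
    intro e he h
    have hm := hC.endpoints_mem he h
    rcases he.2 with hin | hcr
    · exact ⟨⟨hm.1, hin.2.1⟩, hm.2, hin.2.2⟩
    · exact absurd ⟨e, he, hcr, hm⟩ hno
  obtain ⟨u, hu⟩ : ∃ u, f u ∈ C ∧ f u ∈ F.part i := by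
    obtain ⟨a, ⟨e, he, ha⟩, hCa⟩ := id hC
    have haC : a ∈ C := hCa ▸ Relation.ReflTransGen.refl
    have hk := key e he (ha.imp (fun (h : a = e.1) => h ▸ haC) (fun (h : a = e.2.2) => h ▸ haC))
    obtain ⟨-, u, ℓ, u', -, h1, -⟩ := he.1
    exact ⟨u, h1 ▸ hk.1⟩
  have hall : ∀ w, f w ∈ C ∧ f w ∈ F.part i := by
    intro w
    induction hQ u w with
    | refl => exact hu
    | tail _ hxy ih =>
      obtain ⟨e, he, ⟨h1, h2⟩ | ⟨h1, h2⟩⟩ := exists_overlapEdge_of_qAdj hf.1 hxy ih.2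
      · exact h2 ▸ (key e he (Or.inl (h1 ▸ ih.1))).2
      · exact h1 ▸ (key e he (Or.inr (h2 ▸ ih.1))).1
  obtain ⟨w, hw⟩ := exists_notMem_part hf i
  exact hw (hall w).2

end RDF
end

section
/- Let G = (V, E, Σ) be an RDF graph with a fragmentation into fragments F_1, …, F_k, and let Q be a weakly connected query graph with at least two query vertices. Let f be a crossing match of Q in G. Then for every query vertex u ∈ V^Q there exist a fragment index i and a weakly connected component C of the overlap M ∩ F_i such that f(u) ∈ V_i and f(u) is a vertex of C; hence u lies in the domain of the restriction f_C and f_C(u) = f(u). Consequently, f is the common extension of the family of all restrictions f_C taken over all fragments F_i and all weakly connected components C of M ∩ F_i, i.e., no crossing match is missed if all such local partial matches are found (the 'if' direction of Proposition 2). -/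
namespace RDF

theorem overlapVertex_of_mem_part {V L VQ : Type*} {E : Set (V × L × V)} {Vi : Set V}
    {Q : QueryGraph VQ V L} (hQ : Q.WeaklyConnected) (hVQ : ∃ u u' : VQ, u ≠ u')
    {f : VQ → V} (hf : IsMatch E Q f) {u : VQ} (hu : f u ∈ Vi) :
    overlapVertex E Vi Q f (f u) := by
  have : Nontrivial VQ := ⟨hVQ⟩
  obtain ⟨w, hw⟩ := exists_ne u
  -- The first step of a path in `Q` from `u` to `w ≠ u` is a query edge incident to `u`.
  rcases (hQ u w).cases_head with h | ⟨v, ⟨ℓ, h | h⟩, -⟩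
  · exact absurd h.symm hw
  · obtain ⟨p, hp, hl⟩ := hf.2 _ _ _ h
    exact ⟨_, ⟨⟨hp, u, ℓ, v, h, rfl, rfl, hl⟩, mem_fragEdges_of_endpoint hp (Or.inl hu)⟩,
      Or.inl rfl⟩
  · obtain ⟨p, hp, hl⟩ := hf.2 _ _ _ h
    exact ⟨_, ⟨⟨hp, v, ℓ, u, h, rfl, rfl, hl⟩, mem_fragEdges_of_endpoint hp (Or.inr hu)⟩,
      Or.inr rfl⟩

/-- **The "if" direction of Proposition 2.** If `Q` is a weakly connected query with at
least two query vertices and `f` is a crossing match, then every query vertex `u` is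
covered by some restriction `f_C`, where `C` is a weakly connected component of some
overlap `M ∩ F_i` with `f u ∈ V_i`; hence `u ∈ dom f_C` with `f_C u = f u`, so `f` is
the common extension of the family of all such local partial matches and no crossing
match is missed if all of them are found. -/
theorem crossing_match_is_extension_of_restrictions
    {V L VQ : Type*} [Finite V] [Finite VQ] {k : ℕ}
    (E : Set (V × L × V)) (F : Fragmentation V k) (Q : QueryGraph VQ V L)
    (hQ : Q.WeaklyConnected) (hVQ : ∃ u u' : VQ, u ≠ u')
    (f : VQ → V) (hf : IsCrossingMatch E F Q f) :
    (∀ u : VQ, ∃ (i : Fin k) (C : Set V),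
      IsOverlapComponent E (F.part i) Q f C ∧ f u ∈ F.part i ∧ f u ∈ C ∧
      restrictTo C f u = some (f u)) ∧
    (∀ (i : Fin k) (C : Set V), IsOverlapComponent E (F.part i) Q f C →
      ∀ u a, restrictTo C f u = some a → f u = a) := by
  refine ⟨fun u => ?_, fun i C _ u a h => ?_⟩
  · obtain ⟨i, hi⟩ := F.cover (f u)
    have hC : f u ∈ {b | Relation.ReflTransGen (overlapAdj E (F.part i) Q f) (f u) b} :=
      Relation.ReflTransGen.refl
    exact ⟨i, _, ⟨f u, overlapVertex_of_mem_part hQ hVQ hf.1 hi, rfl⟩, hi, hC, if_pos hC⟩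
  · unfold restrictTo at h
    split_ifs at h
    exact Option.some.inj h

end RDF
end

section
/- Let Ω be a finite set and let U_1, …, U_n be subsets of Ω with U_1 ∪ ⋯ ∪ U_n = Ω. Suppose P = (P_1, …, P_n) is an optimal partitioning of Ω with respect to (U_1, …, U_n) and the block P_m has the largest size, i.e., |P_m| ≥ |P_i| for every i ∈ {1, …, n}. Then P_m = U_m (Theorem 3 of the paper). -/
/-!
Exchange argument. If `P m ≠ U m`, some `x ∈ U m` lies in another block `P j`. Moving `x` from
`P j` to `P m` yields again a partitioning, and with `a = |P m|`, `b = |P j|`, `b ≤ a`, it replaces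
the factor `(a + 1) * (b + 1)` of the join cost by `(a + 2) * b`, which is strictly smaller. This
contradicts optimality. The two halves are `isPartitioning_moveElem` and `joinCost_moveElem_lt`.
-/

/-- A partitioning of `Ω` with respect to the family `U`: a tuple of pairwise disjoint
sets `P i ⊆ U i` whose union is `Ω`. -/
def IsPartitioning {α ι : Type*} (Ω : Finset α) (U P : ι → Finset α) : Prop :=
  (∀ i, P i ⊆ U i) ∧ (∀ i j, i ≠ j → Disjoint (P i) (P j)) ∧
  (∀ x, x ∈ Ω ↔ ∃ i, x ∈ P i)

/-- The join cost of a partitioning: `∏ i (|P i| + 1)`. -/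
def joinCost {α ι : Type*} [Fintype ι] (P : ι → Finset α) : ℕ :=
  ∏ i, ((P i).card + 1)

/-- An optimal partitioning: one of minimal join cost. -/
def IsOptimalPartitioning {α ι : Type*} [Fintype ι]
    (Ω : Finset α) (U P : ι → Finset α) : Prop :=
  IsPartitioning Ω U P ∧
    ∀ P' : ι → Finset α, IsPartitioning Ω U P' → joinCost P ≤ joinCost P'

/-- The family obtained from `P` by moving the element `x` into the block of index `m`,
removing it from every other block. -/
def moveElem {α ι : Type*} [DecidableEq α] [DecidableEq ι] (P : ι → Finset α) (m : ι) (x : α) :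
    ι → Finset α :=
  fun i => if i = m then insert x (P m) else (P i).erase x

theorem isPartitioning_moveElem {α ι : Type*} [DecidableEq α] [DecidableEq ι] {Ω : Finset α}
    {U P : ι → Finset α} (hP : IsPartitioning Ω U P) {m : ι} {x : α} (hxU : x ∈ U m)
    (hxΩ : x ∈ Ω) : IsPartitioning Ω U (moveElem P m x) := by
  obtain ⟨hsub, hdisj, hcov⟩ := hP
  have mem : ∀ i y, y ∈ moveElem P m x i ↔ (y = x ∧ i = m) ∨ (y ≠ x ∧ y ∈ P i) := by
    intro i y
    unfold moveElem
    split_ifs with h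
    · subst h
      rw [Finset.mem_insert]
      tauto
    · rw [Finset.mem_erase]
      tauto
  refine ⟨fun i y hy => ?_, fun i j hij => ?_, fun y => ?_⟩
  · rcases (mem i y).1 hy with ⟨rfl, rfl⟩ | ⟨-, h⟩
    exacts [hxU, hsub i h]
  · rw [Finset.disjoint_left]
    intro y hi hj
    rw [mem] at hi hj
    rcases hi with ⟨hy, hi⟩ | ⟨hy, hi⟩ <;> rcases hj with ⟨hy', hj⟩ | ⟨hy', hj⟩
    · exact hij (hi.trans hj.symm)
    · exact hy' hy
    · exact hy hy'
    · exact Finset.disjoint_left.1 (hdisj i j hij) hi hj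
  · simp only [mem]
    by_cases hy : y = x
    · subst hy
      simp [hxΩ]
    · simp [hy, hcov]

theorem joinCost_moveElem_lt {α ι : Type*} [DecidableEq α] [DecidableEq ι] [Fintype ι]
    {P : ι → Finset α} (hdisj : ∀ i j, i ≠ j → Disjoint (P i) (P j)) {m j : ι} (hjm : j ≠ m)
    {x : α} (hx : x ∈ P j) (hcard : (P j).card ≤ (P m).card) :
    joinCost (moveElem P m x) < joinCost P := by
  have notMem : ∀ i, i ≠ j → x ∉ P i := fun i hi =>
    Finset.disjoint_left.1 (hdisj j i hi.symm) hx
  -- Only the factors of index `m` and `j` change, so both products share the remaining ones.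
  have split : ∀ Q : ι → Finset α, joinCost Q = ((Q m).card + 1) * (((Q j).card + 1) *
      ∏ i ∈ (Finset.univ.erase m).erase j, ((Q i).card + 1)) := by
    intro Q
    rw [joinCost, Finset.mul_prod_erase (Finset.univ.erase m) (fun i => (Q i).card + 1)
      (by simp [hjm]), Finset.mul_prod_erase Finset.univ (fun i => (Q i).card + 1) (by simp)]
  have rest : ∏ i ∈ (Finset.univ.erase m).erase j, ((moveElem P m x i).card + 1) =
      ∏ i ∈ (Finset.univ.erase m).erase j, ((P i).card + 1) := by
    refine Finset.prod_congr rfl fun i hi => ?_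
    simp only [Finset.mem_erase] at hi
    rw [moveElem, if_neg hi.2.1, Finset.erase_eq_of_notMem (notMem i hi.1)]
  have card_m : (moveElem P m x m).card = (P m).card + 1 := by
    rw [moveElem, if_pos rfl, Finset.card_insert_of_notMem (notMem m hjm.symm)]
  have card_j : (moveElem P m x j).card + 1 = (P j).card := by
    rw [moveElem, if_neg hjm, Finset.card_erase_add_one hx]
  rw [split, split, rest, card_m, card_j, ← mul_assoc, ← mul_assoc]
  refine Nat.mul_lt_mul_of_pos_right ?_ (Finset.prod_pos fun i _ => Nat.succ_pos _)
  nlinarith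

/-- **Theorem 3.** If `P` is an optimal partitioning of `Ω` with respect to
`(U_1, …, U_n)` and the block `P m` has the largest size, then `P m = U m`. -/
theorem largest_block_of_optimal_partitioning_eq
    {α : Type*} [DecidableEq α] {n : ℕ} (Ω : Finset α) (U : Fin n → Finset α)
    (hUsub : ∀ i, U i ⊆ Ω) (hUcover : ∀ x ∈ Ω, ∃ i, x ∈ U i)
    (P : Fin n → Finset α) (hP : IsOptimalPartitioning Ω U P)
    (m : Fin n) (hm : ∀ i, (P i).card ≤ (P m).card) :
    P m = U m := by
  obtain ⟨hpart, hopt⟩ := hP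
  refine Finset.Subset.antisymm (hpart.1 m) fun x hxU => ?_
  have hxΩ := hUsub m hxU
  obtain ⟨j, hxj⟩ := (hpart.2.2 x).1 hxΩ
  by_cases hjm : j = m
  · exact hjm ▸ hxj
  · exact absurd (hopt _ (isPartitioning_moveElem hpart hxU hxΩ))
      (joinCost_moveElem_lt hpart.2.1 hjm hxj (hm j)).not_ge
end

section
/- Let Ω be a finite set and let U_1, …, U_n be subsets of Ω with U_1 ∪ ⋯ ∪ U_n = Ω. Let P = (P_1, …, P_n) be a partitioning of Ω with respect to (U_1, …, U_n), let j and m be distinct indices, and let x ∈ P_j with x ∈ U_m. If |P_m| ≥ |P_j|, then the tuple P′ obtained from P by removing x from P_j and adding x to P_m is again a partitioning of Ω with respect to (U_1, …, U_n), and Cost(P′) < Cost(P). (This is the exchange step in the proof of Theorem 3: moving an element of U_m from a smaller block into the largest block strictly decreases the join cost.) -/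
/-! The moved element `x` lies in the new tuple exactly in the block `m`, and every other element
stays where it was (`mem_exchange_iff`), so the new tuple is again a partitioning. In the cost only
the factors at `j` and `m` change: with `a = |P j|` and `b = |P m|`, the product `(a + 1) (b + 1)`
becomes `a (b + 2)`, which is smaller by `b - a + 1 > 0`. The remaining factors are positive, so
the inequality survives multiplication by them. -/

/-- Disjointness of the blocks of `P` enters here: `x` lies in no block other than `P j`, so that
the blocks `i ≠ j, m`, which are left untouched, do not contain it. -/
theorem mem_exchange_iff {α ι : Type*} [DecidableEq α] [DecidableEq ι] {P : ι → Finset α}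
    (hdisj : ∀ i k, i ≠ k → Disjoint (P i) (P k)) {j m : ι} (hjm : j ≠ m) {x : α}
    (hx : x ∈ P j) (i : ι) (y : α) :
    y ∈ (if i = j then (P j).erase x else if i = m then insert x (P m) else P i) ↔
      (y = x ∧ i = m) ∨ (y ≠ x ∧ y ∈ P i) := by
  have hx' : ∀ k, k ≠ j → x ∉ P k := fun k hk h =>
    Finset.disjoint_left.mp (hdisj k j hk) h hx
  split_ifs with h1 h2
  · subst h1
    simp [hjm]
  · subst h2
    rw [Finset.mem_insert]
    by_cases hy : y = x <;> simp [hy]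
  · by_cases hy : y = x
    · simp [hy, h2, hx' i h1]
    · simp [hy]

/-- **The exchange step in the proof of Theorem 3.** Moving an element `x ∈ P j ∩ U m`
(for `j ≠ m`) from the block `P j` into a block `P m` that is at least as large yields
again a partitioning of `Ω` w.r.t. `(U_1, …, U_n)` and strictly decreases the join
cost. -/
theorem exchange_step_decreases_cost
    {α : Type*} [DecidableEq α] {n : ℕ} (Ω : Finset α) (U : Fin n → Finset α)
    (hUsub : ∀ i, U i ⊆ Ω) (hUcover : ∀ x ∈ Ω, ∃ i, x ∈ U i)
    (P : Fin n → Finset α) (hP : IsPartitioning Ω U P)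
    (j m : Fin n) (hjm : j ≠ m) (x : α) (hx : x ∈ P j) (hxU : x ∈ U m)
    (hcard : (P j).card ≤ (P m).card) :
    IsPartitioning Ω U
      (fun i => if i = j then (P j).erase x
        else if i = m then insert x (P m) else P i) ∧
    joinCost
      (fun i => if i = j then (P j).erase x
        else if i = m then insert x (P m) else P i) < joinCost P := by
  obtain ⟨hsub, hdisj, hcov⟩ := hP
  have hmem := mem_exchange_iff hdisj hjm hx
  refine ⟨⟨fun i y hy => ?_, fun i k hik => ?_, fun y => ?_⟩, ?_⟩
  · rcases (hmem i y).mp hy with ⟨rfl, rfl⟩ | ⟨-, hy⟩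
    · exact hxU
    · exact hsub i hy
  · refine Finset.disjoint_left.mpr fun y hi hk => ?_
    rcases (hmem i y).mp hi with ⟨rfl, rfl⟩ | ⟨hyx, hi⟩ <;>
      rcases (hmem k y).mp hk with ⟨hy, hkm⟩ | ⟨hyx', hk⟩
    · exact hik hkm.symm
    · exact hyx' rfl
    · exact hyx hy
    · exact Finset.disjoint_left.mp (hdisj i k hik) hi hk
  · simp only [hmem, hcov]
    by_cases hy : y = x
    · subst hy
      exact ⟨fun _ => ⟨m, Or.inl ⟨rfl, rfl⟩⟩, fun _ => ⟨j, hx⟩⟩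
    · simp [hy]
  · have hxm : x ∉ P m := Finset.disjoint_left.mp (hdisj j m hjm) hx
    have hm : m ∈ Finset.univ.erase j := Finset.mem_erase.mpr ⟨hjm.symm, Finset.mem_univ m⟩
    unfold joinCost
    rw [← Finset.mul_prod_erase _ _ (Finset.mem_univ j), ← Finset.mul_prod_erase _ _ hm,
      ← Finset.mul_prod_erase _ (fun i => (P i).card + 1) (Finset.mem_univ j),
      ← Finset.mul_prod_erase _ (fun i => (P i).card + 1) hm, ← mul_assoc, ← mul_assoc]
    have hrest : ∏ i ∈ (Finset.univ.erase j).erase m, ((if i = j then (P j).erase x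
        else if i = m then insert x (P m) else P i).card + 1) =
        ∏ i ∈ (Finset.univ.erase j).erase m, ((P i).card + 1) := by
      refine Finset.prod_congr rfl fun i hi => ?_
      simp only [Finset.mem_erase] at hi
      rw [if_neg hi.2.1, if_neg hi.1]
    rw [hrest]
    refine Nat.mul_lt_mul_of_pos_right ?_ (Finset.prod_pos fun i _ => Nat.succ_pos _)
    simp only [if_true, if_neg hjm.symm, Finset.card_erase_add_one hx,
      Finset.card_insert_of_notMem hxm]
    nlinarith
end

section
/- Let Ω be a finite set, let n ≥ 1, and let U_1, …, U_n be subsets of Ω with U_1 ∪ ⋯ ∪ U_n = Ω. Then OptCost(Ω; U_1, …, U_n) = min_{1 ≤ i ≤ n} ( (|U_i| + 1) · OptCost(Ω \ U_i; (U_j \ U_i)_{j ≠ i}) ), where for each i the family (U_j \ U_i)_{j ≠ i} consists of n − 1 subsets of Ω \ U_i whose union is Ω \ U_i. (This is the optimal-substructure recurrence, Equations (4)–(5) of the paper, stated with the (|·|+1) factors of the join-cost definition.) -/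
/-- The minimum join cost over all partitionings of `Ω` with respect to `U`
(as an infimum in `ℕ`; since `Ω` is finite and `U` covers `Ω`, at least one
partitioning exists and the infimum is attained). -/
noncomputable def OptCost {α ι : Type*} [Fintype ι] (Ω : Finset α) (U : ι → Finset α) : ℕ :=
  sInf {c | ∃ P : ι → Finset α, IsPartitioning Ω U P ∧ c = joinCost P}

theorem exists_isPartitioning {α ι : Type*} (Ω : Finset α)
    (U : ι → Finset α) (hcover : ∀ x ∈ Ω, ∃ i, x ∈ U i) :
    ∃ P : ι → Finset α, IsPartitioning Ω U P := by
  classical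
  choose f hf using hcover
  refine ⟨fun i => {x ∈ Ω | ∃ h : x ∈ Ω, f x h = i}, ?_, ?_, ?_⟩
  · intro i x hx
    obtain ⟨-, h, rfl⟩ := Finset.mem_filter.1 hx
    exact hf x h
  · intro i j hij
    rw [Finset.disjoint_left]
    intro x hx hx'
    obtain ⟨-, h, rfl⟩ := Finset.mem_filter.1 hx
    obtain ⟨-, h', rfl⟩ := Finset.mem_filter.1 hx'
    exact hij rfl
  · intro x
    simp only [Finset.mem_filter]
    exact ⟨fun h => ⟨f x h, h, h, rfl⟩, fun ⟨_, h, _⟩ => h⟩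

theorem optCost_le_joinCost {α ι : Type*} [Fintype ι] {Ω : Finset α} {U P : ι → Finset α}
    (hP : IsPartitioning Ω U P) : OptCost Ω U ≤ joinCost P :=
  Nat.sInf_le ⟨P, hP, rfl⟩

theorem exists_isOptimalPartitioning {α ι : Type*} [Fintype ι] (Ω : Finset α)
    (U : ι → Finset α) (hcover : ∀ x ∈ Ω, ∃ i, x ∈ U i) :
    ∃ P : ι → Finset α, IsOptimalPartitioning Ω U P ∧ OptCost Ω U = joinCost P := by
  obtain ⟨P₀, hP₀⟩ := exists_isPartitioning Ω U hcover
  obtain ⟨P, hP, hc⟩ := Nat.sInf_mem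
    (s := {c | ∃ P : ι → Finset α, IsPartitioning Ω U P ∧ c = joinCost P}) ⟨_, P₀, hP₀, rfl⟩
  exact ⟨P, ⟨hP, fun P' hP' => hc ▸ optCost_le_joinCost hP'⟩, hc⟩

theorem joinCost_eq_mul {α ι : Type*} [Fintype ι] [DecidableEq ι] (P : ι → Finset α) (i : ι) :
    joinCost P = ((P i).card + 1) * joinCost (fun j : {j : ι // j ≠ i} => P j.1) :=
  Fintype.prod_eq_mul_prod_subtype_ne (fun j => (P j).card + 1) i

/-- Moving one element `x` of `U i` into the part `P i` preserves being a partitioning. -/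
theorem IsPartitioning.move {α ι : Type*} [DecidableEq α] [DecidableEq ι]
    {Ω : Finset α} {U P : ι → Finset α} (hP : IsPartitioning Ω U P) {i : ι} {x : α}
    (hxU : x ∈ U i) (hxΩ : x ∈ Ω) :
    IsPartitioning Ω U (fun k => if k = i then insert x (P i) else (P k).erase x) := by
  obtain ⟨hsub, hdisj, hunion⟩ := hP
  refine ⟨fun k => ?_, fun k l hkl => ?_, fun y => ?_⟩
  · by_cases hk : k = i
    · subst hk
      simpa using Finset.insert_subset hxU (hsub k)
    · simpa [hk] using (Finset.erase_subset _ _).trans (hsub k)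
  · have hd := Finset.disjoint_left.1 (hdisj k l hkl)
    rw [Finset.disjoint_left]
    intro y hy hy'
    by_cases hk : k = i <;> by_cases hl : l = i <;> simp [hk, hl] at hy hy' <;> grind
  · rw [hunion]
    constructor
    · rintro ⟨k, hk⟩
      by_cases hyx : y = x
      · exact ⟨i, by simp [hyx]⟩
      · refine ⟨k, ?_⟩
        by_cases hki : k = i
        · subst hki; simp [hk]
        · simp [hki, hk, hyx]
    · rintro ⟨k, hk⟩
      by_cases hki : k = i
      · simp only [hki, if_true, Finset.mem_insert] at hk
        rcases hk with rfl | hk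
        · exact (hunion y).1 hxΩ
        · exact ⟨i, hk⟩
      · simp only [hki, if_false] at hk
        exact ⟨k, Finset.mem_of_mem_erase hk⟩

/-- Moving `x` from `P j` to a part `P i` that is at least as large strictly lowers the cost. -/
theorem IsPartitioning.joinCost_move_lt {α ι : Type*} [DecidableEq α] [Fintype ι] [DecidableEq ι]
    {Ω : Finset α} {U P : ι → Finset α} (hP : IsPartitioning Ω U P) {i j : ι} (hji : j ≠ i)
    {x : α} (hxj : x ∈ P j) (hle : (P j).card ≤ (P i).card) :
    joinCost (fun k => if k = i then insert x (P i) else (P k).erase x) < joinCost P := by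
  have hxi : x ∉ P i := Finset.disjoint_left.1 (hP.2.1 j i hji) hxj
  have hj : j ∈ Finset.univ.erase i := by simp [hji]
  unfold joinCost
  rw [← Finset.mul_prod_erase _ _ (Finset.mem_univ i), ← Finset.mul_prod_erase _ _ hj,
    ← Finset.mul_prod_erase Finset.univ (fun k => (P k).card + 1) (Finset.mem_univ i),
    ← Finset.mul_prod_erase _ (fun k => (P k).card + 1) hj, ← mul_assoc, ← mul_assoc]
  have hrest : ∀ k ∈ (Finset.univ.erase i).erase j,
      (if k = i then insert x (P i) else (P k).erase x).card + 1 = (P k).card + 1 := by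
    intro k hk
    obtain ⟨hkj, hk⟩ := Finset.mem_erase.1 hk
    have hki := Finset.ne_of_mem_erase hk
    rw [if_neg hki, Finset.erase_eq_of_notMem
      (Finset.disjoint_left.1 (hP.2.1 j k hkj.symm) hxj)]
  rw [Finset.prod_congr rfl hrest]
  refine Nat.mul_lt_mul_of_pos_right ?_ (Finset.prod_pos fun _ _ => Nat.succ_pos _)
  beta_reduce
  rw [if_pos rfl, if_neg hji, Finset.card_insert_of_notMem hxi, Finset.card_erase_add_one hxj]
  nlinarith

/-- A largest part of an optimal partitioning is the whole of the set that contains it. -/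
theorem IsOptimalPartitioning.eq_of_card_le {α ι : Type*} [Fintype ι]
    {Ω : Finset α} {U P : ι → Finset α} (hP : IsOptimalPartitioning Ω U P) {i : ι}
    (hi : U i ⊆ Ω) (hmax : ∀ j, (P j).card ≤ (P i).card) : P i = U i := by
  classical
  refine (hP.1.1 i).antisymm fun x hx => ?_
  by_contra hxi
  obtain ⟨j, hj⟩ := (hP.1.2.2 x).1 (hi hx)
  have hji : j ≠ i := by
    rintro rfl
    exact hxi hj
  exact (hP.1.joinCost_move_lt hji hj (hmax j)).not_ge (hP.2 _ (hP.1.move hx (hi hx)))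

theorem IsPartitioning.restrict {α ι : Type*} [DecidableEq α]
    {Ω : Finset α} {U P : ι → Finset α} (hP : IsPartitioning Ω U P) {i : ι} (hi : P i = U i) :
    IsPartitioning (Ω \ U i) (fun j : {j : ι // j ≠ i} => U j.1 \ U i) (fun j => P j.1) := by
  obtain ⟨hsub, hdisj, hunion⟩ := hP
  refine ⟨fun j => ?_, fun j k hjk => hdisj _ _ (Subtype.coe_ne_coe.2 hjk), fun x => ?_⟩
  · exact Finset.subset_sdiff.2 ⟨hsub _, hi ▸ hdisj _ _ j.2⟩
  · rw [Finset.mem_sdiff, hunion, ← hi]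
    constructor
    · rintro ⟨⟨j, hj⟩, hxi⟩
      exact ⟨⟨j, fun h => hxi (h ▸ hj)⟩, hj⟩
    · rintro ⟨j, hj⟩
      exact ⟨⟨j, hj⟩, Finset.disjoint_left.1 (hdisj _ _ j.2) hj⟩

theorem IsPartitioning.extend {α ι : Type*} [DecidableEq α] [DecidableEq ι]
    {Ω : Finset α} {U : ι → Finset α} {i : ι} (hi : U i ⊆ Ω) {Q : {j : ι // j ≠ i} → Finset α}
    (hQ : IsPartitioning (Ω \ U i) (fun j : {j : ι // j ≠ i} => U j.1 \ U i) Q) :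
    IsPartitioning Ω U (fun j => if h : j = i then U i else Q ⟨j, h⟩) := by
  obtain ⟨hsub, hdisj, hunion⟩ := hQ
  have hd : ∀ j, Disjoint (Q j) (U i) := fun j => (Finset.subset_sdiff.1 (hsub j)).2
  refine ⟨fun j => ?_, fun j k hjk => ?_, fun x => ?_⟩
  · by_cases hj : j = i
    · subst hj; simp
    · simpa [hj] using (hsub ⟨j, hj⟩).trans Finset.sdiff_subset
  · by_cases hj : j = i <;> by_cases hk : k = i
    · exact absurd (hj.trans hk.symm) hjk
    · simpa [hj, hk] using (hd ⟨k, hk⟩).symm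
    · simpa [hj, hk] using hd ⟨j, hj⟩
    · simpa [hj, hk] using hdisj ⟨j, hj⟩ ⟨k, hk⟩ (by simpa using hjk)
  · constructor
    · intro hx
      by_cases hxi : x ∈ U i
      · exact ⟨i, by simpa using hxi⟩
      · obtain ⟨j, hj⟩ := (hunion x).1 (Finset.mem_sdiff.2 ⟨hx, hxi⟩)
        exact ⟨j.1, by simpa [j.2] using hj⟩
    · rintro ⟨j, hj⟩
      by_cases h : j = i
      · simp only [h, dif_pos] at hj
        exact hi hj
      · simp only [h, dif_neg, not_false_eq_true] at hj
        exact (Finset.mem_sdiff.1 ((hunion x).2 ⟨_, hj⟩)).1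

/-- **The optimal-substructure recurrence (Equations (4)–(5) of the paper).** For `n ≥ 1`,
`OptCost(Ω; U_1, …, U_n)` is the minimum over `i` of
`(|U_i| + 1) · OptCost(Ω \ U_i; (U_j \ U_i)_{j ≠ i})`. -/
theorem optCost_recurrence
    {α : Type*} [DecidableEq α] {n : ℕ} (hn : 1 ≤ n)
    (Ω : Finset α) (U : Fin n → Finset α)
    (hUsub : ∀ i, U i ⊆ Ω) (hUcover : ∀ x ∈ Ω, ∃ i, x ∈ U i) :
    OptCost Ω U =
      sInf {c | ∃ i : Fin n,
        c = ((U i).card + 1) *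
          OptCost (Ω \ U i) (fun j : {j : Fin n // j ≠ i} => U j.1 \ U i)} := by
  have : Nonempty (Fin n) := ⟨⟨0, hn⟩⟩
  apply le_antisymm
  -- The minimum over `i` is attained, since `1 ≤ n` makes the set of candidates nonempty.
  · obtain ⟨i, hc⟩ := Nat.sInf_mem
      (s := {c | ∃ i : Fin n, c = ((U i).card + 1) *
          OptCost (Ω \ U i) (fun j : {j : Fin n // j ≠ i} => U j.1 \ U i)})
      ⟨_, Classical.arbitrary (Fin n), rfl⟩
    rw [hc]
    obtain ⟨Q, hQ, hQc⟩ := exists_isOptimalPartitioning (Ω \ U i)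
      (fun j : {j : Fin n // j ≠ i} => U j.1 \ U i) (by
        intro x hx
        obtain ⟨hxΩ, hxi⟩ := Finset.mem_sdiff.1 hx
        obtain ⟨j, hj⟩ := hUcover x hxΩ
        exact ⟨⟨j, fun h => hxi (h ▸ hj)⟩, Finset.mem_sdiff.2 ⟨hj, hxi⟩⟩)
    refine (optCost_le_joinCost (hQ.1.extend (hUsub i))).trans_eq ?_
    rw [joinCost_eq_mul _ i, hQc, dif_pos rfl]
    congr 2
    funext j
    exact dif_neg j.2
  · obtain ⟨P, hP, hPc⟩ := exists_isOptimalPartitioning Ω U hUcover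
    obtain ⟨i, hi⟩ := Finite.exists_max fun j => (P j).card
    have hPi := hP.eq_of_card_le (hUsub i) hi
    rw [hPc, joinCost_eq_mul P i, hPi]
    refine le_trans (Nat.sInf_le ?_)
      (Nat.mul_le_mul_left _ (optCost_le_joinCost (hP.1.restrict hPi)))
    exact ⟨i, rfl⟩
end

section
/- Let Ω be a finite set, let n ≥ 2, and let U_1, …, U_n be subsets of Ω with U_1 ∪ ⋯ ∪ U_n = Ω. Then OptCost(Ω; U_1, …, U_n) = min over ordered pairs (i, j) with 1 ≤ i, j ≤ n and i ≠ j of ( (|U_i| + 1) · (|U_j \ U_i| + 1) · OptCost(Ω \ (U_i ∪ U_j); (U_m \ (U_i ∪ U_j))_{m ≠ i, j}) ). (This is the two-level optimal-substructure recurrence, Equation (6) of the paper, stated with the (|·|+1) factors of the join-cost definition.) -/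
/-- The numerical exchange inequality: a block of size `a` receives `c m` elements from each block
`m ∈ t`, leaving `b m` there. -/
lemma exchange_nat {ι : Type*} [DecidableEq ι] (t : Finset ι) (a : ℕ) (b c : ι → ℕ)
    (h : ∀ m ∈ t, b m ≤ a) :
    (a + ∑ m ∈ t, c m + 1) * ∏ m ∈ t, (b m + 1) ≤ (a + 1) * ∏ m ∈ t, (b m + c m + 1) := by
  induction t using Finset.induction_on with
  | empty => simp
  | insert k t hk ih =>
    rw [Finset.sum_insert hk, Finset.prod_insert hk, Finset.prod_insert hk]
    have ih' := ih fun m hm => h m (Finset.mem_insert_of_mem hm)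
    have hb := h k (Finset.mem_insert_self k t)
    set S := ∑ m ∈ t, c m
    set B := ∏ m ∈ t, (b m + 1)
    set C := ∏ m ∈ t, (b m + c m + 1)
    have h1 : (a + (c k + S) + 1) * (b k + 1) ≤ (a + S + 1) * (b k + c k + 1) := by
      have := Nat.mul_le_mul_left (c k) (show b k + 1 ≤ a + S + 1 by omega)
      linarith
    calc (a + (c k + S) + 1) * ((b k + 1) * B)
        = (a + (c k + S) + 1) * (b k + 1) * B := by ring
      _ ≤ (a + S + 1) * (b k + c k + 1) * B := Nat.mul_le_mul_right _ h1
      _ = (b k + c k + 1) * ((a + S + 1) * B) := by ring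
      _ ≤ (b k + c k + 1) * ((a + 1) * C) := Nat.mul_le_mul_left _ ih'
      _ = (a + 1) * ((b k + c k + 1) * C) := by ring

/-- Replacing a largest block by a set `V` covered by the blocks, and removing `V` from the other
blocks, does not increase the cost. The blocks need not be disjoint, and `V` need not contain the
block it replaces. -/
lemma absorb {α ι : Type*} [DecidableEq α] [DecidableEq ι] (s : Finset ι) (P : ι → Finset α)
    (i : ι) (hi : i ∈ s) (hmax : ∀ m ∈ s, (P m).card ≤ (P i).card) (V : Finset α)
    (hV : ∀ x ∈ V, ∃ m ∈ s, x ∈ P m) :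
    (V.card + 1) * ∏ m ∈ s.erase i, ((P m \ V).card + 1) ≤ ∏ m ∈ s, ((P m).card + 1) := by
  have hcard : V.card ≤ (P i).card + ∑ m ∈ s.erase i, (P m ∩ V).card := by
    have hsub : V ⊆ P i ∪ (s.erase i).biUnion fun m => P m ∩ V := by
      intro x hx
      obtain ⟨m, hm, hxm⟩ := hV x hx
      by_cases hmi : m = i
      · subst hmi; exact Finset.mem_union_left _ hxm
      · simp only [Finset.mem_union, Finset.mem_biUnion, Finset.mem_erase, Finset.mem_inter]
        exact Or.inr ⟨m, ⟨hmi, hm⟩, hxm, hx⟩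
    exact (Finset.card_le_card hsub).trans <| (Finset.card_union_le _ _).trans <|
      Nat.add_le_add_left Finset.card_biUnion_le _
  have hex := exchange_nat (s.erase i) (P i).card (fun m => (P m \ V).card)
    (fun m => (P m ∩ V).card) fun m hm =>
      (Finset.card_le_card Finset.sdiff_subset).trans (hmax m (Finset.mem_of_mem_erase hm))
  simp only [Finset.card_sdiff_add_card_inter] at hex
  rw [Finset.mul_prod_erase s (fun m => (P m).card + 1) hi] at hex
  exact (Nat.mul_le_mul_right _ (by omega)).trans hex

lemma optCost_le {α ι : Type*} [Fintype ι] {Ω : Finset α} {U P : ι → Finset α}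
    (h : IsPartitioning Ω U P) : OptCost Ω U ≤ joinCost P :=
  Nat.sInf_le ⟨P, h, rfl⟩

/-- When `U` covers `Ω`, the infimum defining `OptCost` is attained, so it is not the junk value
`sInf ∅ = 0`. -/
lemma exists_isPartitioning_joinCost_eq {α ι : Type*} [Fintype ι] (Ω : Finset α)
    (U : ι → Finset α) (hU : ∀ x ∈ Ω, ∃ i, x ∈ U i) :
    ∃ P, IsPartitioning Ω U P ∧ OptCost Ω U = joinCost P := by
  classical
  -- A partitioning exists: each element goes to one chosen index whose set contains it.
  have hne : {c | ∃ P : ι → Finset α, IsPartitioning Ω U P ∧ c = joinCost P}.Nonempty := by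
    choose f hf using hU
    refine ⟨_, fun i => Ω.filter fun x => ∃ hx : x ∈ Ω, f x hx = i, ⟨?_, ?_, ?_⟩, rfl⟩
    · intro i x hx
      obtain ⟨-, h1, rfl⟩ := Finset.mem_filter.1 hx
      exact hf x h1
    · intro i j hij
      refine Finset.disjoint_left.2 fun x hx hx' => hij ?_
      obtain ⟨-, h1, rfl⟩ := Finset.mem_filter.1 hx
      obtain ⟨-, h2, rfl⟩ := Finset.mem_filter.1 hx'
      rfl
    · intro x
      simp only [Finset.mem_filter]
      exact ⟨fun hx => ⟨f x hx, hx, hx, rfl⟩, fun ⟨_, hx, _⟩ => hx⟩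
  exact Nat.sInf_mem hne

lemma prod_subtype_ne_ne {ι : Type*} [Fintype ι] [DecidableEq ι] (i j : ι) (f : ι → ℕ) :
    ∏ m ∈ (Finset.univ.erase i).erase j, f m = ∏ m : {m : ι // m ≠ i ∧ m ≠ j}, f m.1 :=
  Finset.prod_subtype _ (fun m => by simp [and_comm]) f

/-- **The two-level optimal-substructure recurrence (Equation (6) of the paper).** For
`n ≥ 2`, `OptCost(Ω; U_1, …, U_n)` is the minimum over ordered pairs `(i, j)` with
`i ≠ j` of `(|U_i| + 1) · (|U_j \ U_i| + 1) ·
OptCost(Ω \ (U_i ∪ U_j); (U_m \ (U_i ∪ U_j))_{m ≠ i, j})`. -/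
theorem optCost_two_level_recurrence
    {α : Type*} [DecidableEq α] {n : ℕ} (hn : 2 ≤ n)
    (Ω : Finset α) (U : Fin n → Finset α)
    (hUsub : ∀ i, U i ⊆ Ω) (hUcover : ∀ x ∈ Ω, ∃ i, x ∈ U i) :
    OptCost Ω U =
      sInf {c | ∃ i j : Fin n, i ≠ j ∧
        c = ((U i).card + 1) * ((U j \ U i).card + 1) *
          OptCost (Ω \ (U i ∪ U j))
            (fun m : {m : Fin n // m ≠ i ∧ m ≠ j} => U m.1 \ (U i ∪ U j))} := by
  apply le_antisymm
  · refine le_csInf ⟨_, ⟨0, by omega⟩, ⟨1, by omega⟩, by simp, rfl⟩ ?_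
    rintro _ ⟨i, j, hij, rfl⟩
    obtain ⟨Q, ⟨hQU, hQd, hQc⟩, hQ⟩ := exists_isPartitioning_joinCost_eq (Ω \ (U i ∪ U j))
      (fun m : {m : Fin n // m ≠ i ∧ m ≠ j} => U m.1 \ (U i ∪ U j)) (by
        intro x hx
        obtain ⟨hx, hx'⟩ := Finset.mem_sdiff.1 hx
        obtain ⟨m, hm⟩ := hUcover x hx
        refine ⟨⟨m, ?_, ?_⟩, Finset.mem_sdiff.2 ⟨hm, hx'⟩⟩ <;> rintro rfl <;>
          simp [hm] at hx')
    rw [hQ]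
    -- `P` extends `Q` by the blocks `U i` and `U j \ U i`.
    let P : Fin n → Finset α := fun m =>
      if h : m ≠ i ∧ m ≠ j then Q ⟨m, h⟩ else if m = i then U i else U j \ U i
    have hPi : P i = U i := by simp [P]
    have hPj : P j = U j \ U i := by simp [P, hij.symm]
    have hPQ : ∀ m : {m : Fin n // m ≠ i ∧ m ≠ j}, P m.1 = Q m := fun m => dif_pos m.2
    have hcases : ∀ m, m = i ∨ m = j ∨ ∃ m' : {m : Fin n // m ≠ i ∧ m ≠ j}, m = m'.1 := by
      intro m
      by_cases h1 : m = i
      · exact Or.inl h1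
      by_cases h2 : m = j
      · exact Or.inr (Or.inl h2)
      exact Or.inr (Or.inr ⟨⟨m, h1, h2⟩, rfl⟩)
    have hQU' : ∀ m x, x ∈ Q m → x ∈ U m.1 ∧ x ∉ U i ∧ x ∉ U j := by
      intro m x hx
      simpa using hQU m hx
    have hP : IsPartitioning Ω U P := by
      refine ⟨fun m => ?_, fun k l hkl => ?_, fun x => ⟨fun hx => ?_, fun ⟨m, hx⟩ => ?_⟩⟩
      · rcases hcases m with rfl | rfl | ⟨m, rfl⟩
        · rw [hPi]
        · rw [hPj]; exact Finset.sdiff_subset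
        · rw [hPQ]; exact fun x hx => (hQU' m x hx).1
      · refine Finset.disjoint_left.2 fun x hx hx' => ?_
        rcases hcases k with hk | hk | ⟨k', hk⟩ <;> rcases hcases l with hl | hl | ⟨l', hl⟩
        case inr.inr.inr.inr =>
          rw [hk, hPQ] at hx
          rw [hl, hPQ] at hx'
          exact Finset.disjoint_left.1 (hQd k' l' fun h => hkl (by rw [hk, hl, h])) hx hx'
        all_goals
          simp only [hk, hl, hPi, hPj, hPQ, Finset.mem_sdiff] at hx hx'
          grind
      · by_cases h1 : x ∈ U i
        · exact ⟨i, by rwa [hPi]⟩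
        by_cases h2 : x ∈ U j
        · exact ⟨j, by rw [hPj]; exact Finset.mem_sdiff.2 ⟨h2, h1⟩⟩
        obtain ⟨m, hm⟩ := (hQc x).1 (by simp [hx, h1, h2])
        exact ⟨m.1, by rwa [hPQ]⟩
      · rcases hcases m with rfl | rfl | ⟨m, rfl⟩
        · rw [hPi] at hx; exact hUsub _ hx
        · rw [hPj] at hx; exact hUsub _ (Finset.mem_sdiff.1 hx).1
        · rw [hPQ] at hx; exact hUsub _ (hQU' m x hx).1
    refine (optCost_le hP).trans (le_of_eq ?_)
    unfold joinCost
    rw [← Finset.mul_prod_erase Finset.univ _ (Finset.mem_univ i),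
      ← Finset.mul_prod_erase (Finset.univ.erase i) _ (Finset.mem_erase.2 ⟨hij.symm, Finset.mem_univ j⟩),
      prod_subtype_ne_ne, hPi, hPj, mul_assoc]
    simp only [hPQ]
  · obtain ⟨P, ⟨hPU, hPd, hPc⟩, hP⟩ := exists_isPartitioning_joinCost_eq Ω U hUcover
    rw [hP]
    obtain ⟨i, -, hi⟩ := Finset.exists_max_image Finset.univ (fun m => (P m).card)
      ⟨⟨0, by omega⟩, Finset.mem_univ _⟩
    have hne : (Finset.univ.erase i : Finset (Fin n)).Nonempty := by
      rw [← Finset.card_pos, Finset.card_erase_of_mem (Finset.mem_univ i)]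
      simp; omega
    obtain ⟨j, hj, hjmax⟩ := Finset.exists_max_image (Finset.univ.erase i)
      (fun m => (P m \ U i).card) hne
    have hji : j ≠ i := Finset.ne_of_mem_erase hj
    refine le_trans (Nat.sInf_le (Set.mem_ofPred.2 ⟨i, j, hji.symm, rfl⟩)) ?_
    -- `(P m \ U i) \ (U j \ U i)` is what two applications of `absorb` leave of `P m`.
    have hQ : IsPartitioning (Ω \ (U i ∪ U j))
        (fun m : {m : Fin n // m ≠ i ∧ m ≠ j} => U m.1 \ (U i ∪ U j))
        (fun m => (P m.1 \ U i) \ (U j \ U i)) := by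
      refine ⟨fun m x hx => ?_, fun k l hkl => ?_, fun x => ⟨fun hx => ?_, fun ⟨m, hx⟩ => ?_⟩⟩
      · have := @hPU m.1 x
        simp only [Finset.mem_sdiff, Finset.mem_union] at hx ⊢
        tauto
      · exact (hPd k.1 l.1 fun h => hkl (Subtype.ext h)).mono
          (Finset.sdiff_subset.trans Finset.sdiff_subset)
          (Finset.sdiff_subset.trans Finset.sdiff_subset)
      · simp only [Finset.mem_sdiff, Finset.mem_union, not_or] at hx
        obtain ⟨m, hm⟩ := (hPc x).1 hx.1
        refine ⟨⟨m, ?_, ?_⟩, by simp [hm, hx]⟩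
        · rintro rfl; exact hx.2.1 (hPU _ hm)
        · rintro rfl; exact hx.2.2 (hPU _ hm)
      · have := (hPc x).2 ⟨m.1, by simp only [Finset.mem_sdiff] at hx; exact hx.1.1⟩
        simp only [Finset.mem_sdiff, Finset.mem_union] at hx ⊢
        tauto
    have h1 := absorb Finset.univ P i (Finset.mem_univ i) hi (U i) fun x hx => by
      obtain ⟨m, hm⟩ := (hPc x).1 (hUsub i hx)
      exact ⟨m, Finset.mem_univ m, hm⟩
    have h2 := absorb (Finset.univ.erase i) (fun m => P m \ U i) j hj hjmax (U j \ U i)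
      fun x hx => by
        obtain ⟨hxj, hxi⟩ := Finset.mem_sdiff.1 hx
        obtain ⟨m, hm⟩ := (hPc x).1 (hUsub j hxj)
        -- The block containing `x` is not the `i`-th one, since `P i ⊆ U i`.
        refine ⟨m, Finset.mem_erase.2 ⟨?_, Finset.mem_univ m⟩, Finset.mem_sdiff.2 ⟨hm, hxi⟩⟩
        rintro rfl; exact hxi (hPU _ hm)
    rw [prod_subtype_ne_ne] at h2
    calc _ ≤ ((U i).card + 1) * ((U j \ U i).card + 1) * joinCost _ :=
          Nat.mul_le_mul_left _ (optCost_le hQ)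
      _ = ((U i).card + 1) * (((U j \ U i).card + 1) * joinCost _) := mul_assoc _ _ _
      _ ≤ _ := (Nat.mul_le_mul_left _ h2).trans h1
end
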